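/- Assume p^2·e_0 − (p+1)·b_2 + (p−1)·b_1 > 0. Then π_0^{d_0 − d_j}·Ψ^{(j)}·ρ_r ∈ 𝔐_2 whenever 0 ≤ r, j < p^2 and r + j ≥ p^2. -/

import Mathlib

/-- A normalized discrete valuation on a field `K`, recorded as a function
`v : K → ℤ`.  The value of `v` at `0` is irrelevant: all conditions below only
refer to nonzero elements (the convention `v 0 = ∞` being understood). -/
structure IsDiscVal {K : Type*} [Field K] (v : K → ℤ) : Prop where
  map_one : v 1 = 0
  map_mul : ∀ x y : K, x ≠ 0 → y ≠ 0 → v (x * y) = v x + v y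
  min_le_add : ∀ x y : K, x ≠ 0 → y ≠ 0 → x + y ≠ 0 → min (v x) (v y) ≤ v (x + y)
  exists_uniformizer : ∃ π : K, π ≠ 0 ∧ v π = 1

/-- The condition `n ≤ v x`, with the convention `v 0 = ∞`. -/
def ValGE {K : Type*} [Field K] (v : K → ℤ) (n : ℤ) (x : K) : Prop := x = 0 ∨ n ≤ v x

section Valuation

variable {K : Type*} [Field K] {v : K → ℤ} {m n : ℤ} {x y : K}

theorem ValGE.zero : ValGE v n 0 := Or.inl rfl

theorem ValGE.mono (h : ValGE v n x) (hmn : m ≤ n) : ValGE v m x :=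
  h.imp id fun h => hmn.trans h

theorem ValGE.le (h : ValGE v n x) (hx : x ≠ 0) : n ≤ v x := h.resolve_left hx

theorem ValGE.of_le (h : n ≤ v x) : ValGE v n x := Or.inr h

theorem IsDiscVal.map_neg (hv : IsDiscVal v) (hx : x ≠ 0) : v (-x) = v x := by
  have h1 : (-1 : K) ≠ 0 := neg_ne_zero.mpr one_ne_zero
  have h2 := hv.map_mul (-1) (-1) h1 h1
  have h3 := hv.map_mul (-1) x h1 hx
  rw [neg_mul_neg, one_mul, hv.map_one] at h2
  rw [neg_one_mul] at h3
  omega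

theorem IsDiscVal.map_pow (hv : IsDiscVal v) (hx : x ≠ 0) (k : ℕ) : v (x ^ k) = k * v x := by
  induction k with
  | zero => simp [hv.map_one]
  | succ k ih => rw [pow_succ, hv.map_mul _ _ (pow_ne_zero k hx) hx, ih]; push_cast; ring

theorem IsDiscVal.map_inv (hv : IsDiscVal v) (hx : x ≠ 0) : v x⁻¹ = -v x := by
  have h := hv.map_mul x x⁻¹ hx (inv_ne_zero hx)
  rw [mul_inv_cancel₀ hx, hv.map_one] at h
  omega

theorem IsDiscVal.map_zpow (hv : IsDiscVal v) (hx : x ≠ 0) (k : ℤ) : v (x ^ k) = k * v x := by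
  obtain ⟨n, rfl | rfl⟩ := k.eq_nat_or_neg
  · rw [zpow_natCast, hv.map_pow hx]
  · rw [zpow_neg, zpow_natCast, hv.map_inv (pow_ne_zero n hx), hv.map_pow hx]; ring

theorem ValGE.neg (hv : IsDiscVal v) (h : ValGE v n x) : ValGE v n (-x) := by
  rcases eq_or_ne x 0 with rfl | hx
  · rw [neg_zero]; exact .zero
  · exact .of_le (by rw [hv.map_neg hx]; exact h.le hx)

theorem ValGE.add (hv : IsDiscVal v) (hx : ValGE v n x) (hy : ValGE v n y) :
    ValGE v n (x + y) := by
  rcases eq_or_ne x 0 with rfl | hx0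
  · rwa [zero_add]
  rcases eq_or_ne y 0 with rfl | hy0
  · rwa [add_zero]
  by_cases hxy : x + y = 0
  · exact Or.inl hxy
  · exact .of_le ((le_min (hx.le hx0) (hy.le hy0)).trans (hv.min_le_add x y hx0 hy0 hxy))

theorem ValGE.sub (hv : IsDiscVal v) (hx : ValGE v n x) (hy : ValGE v n y) :
    ValGE v n (x - y) := by
  rw [sub_eq_add_neg]; exact hx.add hv (hy.neg hv)

theorem ValGE.mul (hv : IsDiscVal v) (hx : ValGE v m x) (hy : ValGE v n y) :
    ValGE v (m + n) (x * y) := by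
  rcases eq_or_ne x 0 with rfl | hx0
  · rw [zero_mul]; exact .zero
  rcases eq_or_ne y 0 with rfl | hy0
  · rw [mul_zero]; exact .zero
  exact .of_le (by rw [hv.map_mul x y hx0 hy0]; exact add_le_add (hx.le hx0) (hy.le hy0))

theorem ValGE.sum (hv : IsDiscVal v) {ι : Type*} (s : Finset ι) (f : ι → K)
    (h : ∀ i ∈ s, ValGE v n (f i)) : ValGE v n (∑ i ∈ s, f i) :=
  Finset.sum_induction f (ValGE v n) (fun _ _ ha hb => ha.add hv hb) .zero h

theorem ValGE.one (hv : IsDiscVal v) : ValGE v 0 1 := .of_le hv.map_one.ge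

theorem ValGE.pow (hv : IsDiscVal v) (h : ValGE v n x) (k : ℕ) : ValGE v (k * n) (x ^ k) := by
  induction k with
  | zero => simpa using ValGE.one hv
  | succ k ih => rw [pow_succ]; exact (ih.mul hv h).mono (by push_cast; linarith)

theorem ValGE.natCast (hv : IsDiscVal v) (k : ℕ) : ValGE v 0 (k : K) := by
  induction k with
  | zero => rw [Nat.cast_zero]; exact .zero
  | succ k ih => rw [Nat.cast_succ]; exact ih.add hv (.one hv)

/-- A nonzero element cannot satisfy `v x + 1 ≤ v x`. -/
theorem ValGE.not_succ (hx : x ≠ 0) : ¬ ValGE v (v x + 1) x := fun h => by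
  have := h.le hx
  omega

/-- Summands with pairwise distinct valuations cannot cancel. -/
theorem ValGE.of_sum (hv : IsDiscVal v) {ι : Type*} (s : Finset ι) (f : ι → K)
    (hf : ∀ i ∈ s, ∀ j ∈ s, f i ≠ 0 → f j ≠ 0 → v (f i) = v (f j) → i = j)
    (h : ValGE v n (∑ i ∈ s, f i)) : ∀ i ∈ s, ValGE v n (f i) := by
  classical
  by_contra! hc
  obtain ⟨i₀, hi₀, hc⟩ := hc
  have hi₀' : i₀ ∈ s.filter fun i => f i ≠ 0 :=
    Finset.mem_filter.mpr ⟨hi₀, fun h0 => hc (Or.inl h0)⟩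
  obtain ⟨j, hj, hmin⟩ := (s.filter fun i => f i ≠ 0).exists_min_image (fun i => v (f i)) ⟨_, hi₀'⟩
  obtain ⟨hjs, hj0⟩ := Finset.mem_filter.mp hj
  have hlt : v (f j) + 1 ≤ n := by
    have h1 := hmin i₀ hi₀'
    have h2 : ¬ n ≤ v (f i₀) := fun h => hc (.of_le h)
    omega
  refine ValGE.not_succ (v := v) hj0 ?_
  rw [← Finset.add_sum_erase s f hjs] at h
  have hrest : ValGE v (v (f j) + 1) (∑ i ∈ s.erase j, f i) := by
    refine ValGE.sum hv _ _ fun i hi => ?_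
    obtain ⟨hij, his⟩ := Finset.mem_erase.mp hi
    rcases eq_or_ne (f i) 0 with h0 | h0
    · exact Or.inl h0
    · have h1 := hmin i (Finset.mem_filter.mpr ⟨his, h0⟩)
      have h2 : v (f i) ≠ v (f j) := fun he => hij (hf i his j hjs h0 hj0 he)
      exact .of_le (by omega)
  simpa using (h.mono hlt).sub hv hrest

theorem ValGE.eq_zero_of_forall (h : ∀ n, ValGE v n x) : x = 0 := by
  by_contra hx
  exact ValGE.not_succ hx (h _)

theorem IsDiscVal.map_add_eq (hv : IsDiscVal v) (hx : x ≠ 0) (hy : ValGE v (v x + 1) y) :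
    x + y ≠ 0 ∧ v (x + y) = v x := by
  have h0 : x + y ≠ 0 := fun h0 => ValGE.not_succ (v := v) hx <| by
    rw [eq_neg_of_add_eq_zero_left h0]
    rw [eq_neg_of_add_eq_zero_left h0] at hy
    exact hy.neg hv
  refine ⟨h0, le_antisymm (not_lt.mp fun hlt => ?_) ?_⟩
  · refine ValGE.not_succ (v := v) hx ?_
    simpa using (ValGE.of_le (v := v) (x := x + y) (Int.add_one_le_iff.mpr hlt)).sub hv hy
  · exact ((ValGE.of_le le_rfl).add hv (hy.mono (by linarith))).le h0

theorem IsDiscVal.map_natCast_of_coprime (hv : IsDiscVal v) {p k : ℕ} (hk : (k : K) ≠ 0)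
    (hp : ValGE v 1 (p : K)) (hpk : Nat.Coprime k p) : v (k : K) = 0 := by
  have h0 := (ValGE.natCast hv k).le hk
  by_contra hne
  have hk1 : ValGE v 1 (k : K) := .of_le (by omega)
  have hint : ∀ z : ℤ, ValGE v 0 (z : K) := fun z => by
    obtain ⟨n, rfl | rfl⟩ := z.eq_nat_or_neg
    · simpa using ValGE.natCast hv n
    · simpa using (ValGE.natCast hv n).neg hv
  have hb := Nat.gcd_eq_gcd_ab k p
  rw [hpk.gcd_eq_one] at hb
  have hb' : (1 : K) = k * (k.gcdA p : ℤ) + p * (k.gcdB p : ℤ) := by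
    exact_mod_cast congrArg (Int.cast : ℤ → K) hb
  refine ValGE.not_succ (v := v) (one_ne_zero (α := K)) ?_
  rw [hv.map_one, hb']
  exact ((hk1.mul hv (hint _)).mono (by norm_num)).add hv ((hp.mul hv (hint _)).mono (by norm_num))

/-- The mixed terms of `(x + y) ^ p`. -/
theorem ValGE.mixed_terms (hv : IsDiscVal v) {p : ℕ} {a b c : ℤ}
    (hx : ValGE v a x) (hy : ValGE v b y)
    (hc : ∀ k : ℕ, 0 < k → k < p → c ≤ k * a + (p - k) * b) :
    ValGE v c (∑ k ∈ Finset.Ioo 0 p, x ^ k * y ^ (p - k) * ((p.choose k / p : ℕ) : K)) := by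
  refine ValGE.sum hv _ _ fun k hk => ?_
  obtain ⟨hk0, hkp⟩ := Finset.mem_Ioo.mp hk
  refine (((hx.pow hv k).mul hv (hy.pow hv (p - k))).mul hv (.natCast hv _)).mono ?_
  have := hc k hk0 hkp
  push_cast [Nat.cast_sub hkp.le]
  linarith

theorem ValGE.binomial (hv : IsDiscVal v) [CharZero K] {p i : ℕ} (hp : p.Prime)
    (hpv : ValGE v 1 (p : K)) (hn : 0 ≤ n) (hx : ValGE v (-n) x) (hi : i < p) :
    ValGE v (-(i * n)) ((∏ k ∈ Finset.range i, (x - k)) / (i.factorial : K)) := by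
  have hfac : v (i.factorial : K) = 0 :=
    hv.map_natCast_of_coprime (by exact_mod_cast i.factorial_ne_zero) hpv
      (((Nat.coprime_factorial_iff hp.ne_one).mpr (by rwa [hp.minFac_eq])).symm)
  have hprod : ∀ i : ℕ, ValGE v (-(i * n)) (∏ k ∈ Finset.range i, (x - k)) := by
    intro i
    induction i with
    | zero => simpa using ValGE.one hv
    | succ i ih =>
      rw [Finset.prod_range_succ]
      refine (ih.mul hv (hx.sub hv ((ValGE.natCast hv i).mono (by linarith)))).mono ?_
      push_cast
      linarith
  rw [div_eq_mul_inv]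
  refine ((hprod i).mul hv (.of_le (n := 0) ?_)).mono (by linarith)
  rw [hv.map_inv (by exact_mod_cast i.factorial_ne_zero), hfac, neg_zero]

end Valuation

section Operators

variable {F K : Type*} [Field F] [Field K] [Algebra F K] {v : K → ℤ} {m n : ℤ}
  {S T : Module.End F K}

/-- The operator `T` increases valuations by at least `n`. -/
def RaisesVal (v : K → ℤ) (n : ℤ) (T : Module.End F K) : Prop :=
  ∀ (t : ℤ) (x : K), ValGE v t x → ValGE v (t + n) (T x)

theorem RaisesVal.mono (h : RaisesVal v n T) (hmn : m ≤ n) : RaisesVal v m T :=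
  fun t x hx => (h t x hx).mono (by linarith)

theorem RaisesVal.add (hv : IsDiscVal v) (hS : RaisesVal v n S) (hT : RaisesVal v n T) :
    RaisesVal v n (S + T) := fun t x hx => (hS t x hx).add hv (hT t x hx)

theorem RaisesVal.sub (hv : IsDiscVal v) (hS : RaisesVal v n S) (hT : RaisesVal v n T) :
    RaisesVal v n (S - T) := fun t x hx => (hS t x hx).sub hv (hT t x hx)

theorem RaisesVal.mul (hS : RaisesVal v m S) (hT : RaisesVal v n T) :
    RaisesVal v (m + n) (S * T) :=
  fun t x hx => (hS _ _ (hT t x hx)).mono (by linarith)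

theorem RaisesVal.one : RaisesVal v 0 (1 : Module.End F K) :=
  fun t x hx => by simpa using hx

theorem RaisesVal.pow (hT : RaisesVal v n T) (k : ℕ) : RaisesVal v (k * n) (T ^ k) := by
  induction k with
  | zero => simpa using RaisesVal.one
  | succ k ih => rw [pow_succ]; exact (ih.mul hT).mono (by push_cast; linarith)

theorem RaisesVal.sum (hv : IsDiscVal v) {ι : Type*} (s : Finset ι) (f : ι → Module.End F K)
    (h : ∀ i ∈ s, RaisesVal v n (f i)) : RaisesVal v n (∑ i ∈ s, f i) :=
  Finset.sum_induction f (RaisesVal v n) (fun _ _ ha hb => ha.add hv hb)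
    (fun _ _ _ => .zero) h

theorem RaisesVal.smul (hv : IsDiscVal v) {c : F} (hc : ValGE v m (algebraMap F K c))
    (hT : RaisesVal v n T) : RaisesVal v (m + n) (c • T) := fun t x hx => by
  rw [LinearMap.smul_apply, Algebra.smul_def]
  exact (hc.mul hv (hT t x hx)).mono (by linarith)

theorem RaisesVal.natCast (hv : IsDiscVal v) {k : ℕ} (hk : ValGE v n (k : K)) :
    RaisesVal v n (k : Module.End F K) := fun t x hx => by
  rw [Module.End.natCast_apply, nsmul_eq_mul]
  exact (hk.mul hv hx).mono (by linarith)

/-- Comparison of `(1 + T) ^ p` with `1 + T ^ p`. -/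
theorem RaisesVal.one_add_pow (hv : IsDiscVal v) {p : ℕ} (hp : p.Prime) {e : ℤ}
    (he : ValGE v e (p : K)) (hn : 0 ≤ n) (hT : RaisesVal v n T) :
    RaisesVal v (e + n) ((1 + T) ^ p - 1 - T ^ p) := by
  have h := (Commute.one_right T).add_pow_prime_eq' hp
  rw [add_comm T 1] at h
  rw [h, show ∀ a b : Module.End F K, a + 1 ^ p + b - 1 - a = b from fun a b => by
    rw [one_pow]; abel]
  refine (RaisesVal.natCast (F := F) hv he).mul (RaisesVal.sum hv _ _ fun k hk => ?_)
  obtain ⟨hk0, -⟩ := Finset.mem_Ioo.mp hk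
  rw [one_pow, mul_one]
  refine ((hT.pow k).mul (RaisesVal.natCast (F := F) hv (.natCast hv _))).mono ?_
  have : (1 : ℤ) ≤ k := by exact_mod_cast hk0
  nlinarith

/-- If `σ - 1` raises the valuation of one element `Y` by `b`, and the powers of `Y` have distinct
valuations modulo the ramification index, then it raises all valuations by `b`. -/
theorem RaisesVal.of_generator (hv : IsDiscVal v) [FiniteDimensional F K]
    {v0 : F → ℤ} {N : ℕ} (hdeg : Module.finrank F K = N)
    (hram : ∀ x : F, x ≠ 0 → v (algebraMap F K x) = N * v0 x) {Y : K} (hY : Y ≠ 0)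
    (hcop : IsCoprime (v Y) N) (σ : K ≃ₐ[F] K) {b : ℤ} (hb : 0 ≤ b)
    (hσ : ValGE v (v Y + b) (σ Y - Y)) :
    RaisesVal v b (σ.toLinearMap - 1 : Module.End F K) := by
  have hdist : ∀ c : Fin N → F, ∀ i ∈ Finset.univ, ∀ j ∈ Finset.univ,
      c i • Y ^ (i : ℕ) ≠ 0 → c j • Y ^ (j : ℕ) ≠ 0 →
      v (c i • Y ^ (i : ℕ)) = v (c j • Y ^ (j : ℕ)) → i = j := by
    intro c i _ j _ hi hj hij
    have hval : ∀ k : Fin N, c k • Y ^ (k : ℕ) ≠ 0 →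
        v (c k • Y ^ (k : ℕ)) = N * v0 (c k) + k * v Y := fun k hk => by
      have hck : c k ≠ 0 := fun h => hk (by rw [h, zero_smul])
      rw [Algebra.smul_def, hv.map_mul _ _ ((map_ne_zero _).mpr hck) (pow_ne_zero _ hY),
        hram _ hck, hv.map_pow hY]
    rw [hval i hi, hval j hj] at hij
    have hdvd : (N : ℤ) ∣ v Y * ((i : ℤ) - j) :=
      ⟨v0 (c j) - v0 (c i), by linear_combination hij⟩
    have hdvd' := hcop.symm.dvd_of_dvd_mul_left hdvd
    have hlt : |((i : ℕ) : ℤ) - (j : ℕ)| < N := by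
      have := i.2; have := j.2
      rw [abs_lt]; omega
    have := Int.eq_zero_of_abs_lt_dvd hdvd' hlt
    exact Fin.ext (by omega)
  have hli : LinearIndependent F fun i : Fin N => Y ^ (i : ℕ) := by
    rw [Fintype.linearIndependent_iff]
    intro c hc i
    have h0 : c i • Y ^ (i : ℕ) = 0 := ValGE.eq_zero_of_forall (v := v) fun n =>
      ValGE.of_sum hv Finset.univ _ (hdist c) (Or.inl hc) i (Finset.mem_univ i)
    exact (smul_eq_zero.mp h0).resolve_right (pow_ne_zero _ hY)
  have hspan := hli.span_eq_top_of_card_eq_finrank' (by rw [Fintype.card_fin, hdeg])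
  intro t x hx
  have hxs : x ∈ Submodule.span F (Set.range fun i : Fin N => Y ^ (i : ℕ)) := by
    rw [hspan]; trivial
  obtain ⟨c, rfl⟩ := (Submodule.mem_span_range_iff_exists_fun F).mp hxs
  have hterm := ValGE.of_sum hv Finset.univ _ (hdist c) hx
  rw [map_sum]
  refine ValGE.sum hv _ _ fun i hi => ?_
  have hquot : ValGE v b (σ Y / Y - 1) := by
    have h := hσ.mul hv (ValGE.of_le (hv.map_inv hY).ge)
    rw [show (σ Y - Y) * Y⁻¹ = σ Y / Y - 1 by field_simp] at h
    exact h.mono (by linarith)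
  have hpow : ∀ k : ℕ, ValGE v b ((σ Y / Y) ^ k - 1) := by
    intro k
    rw [← geom_sum_mul]
    have h0 : ValGE v 0 (σ Y / Y) := by
      simpa using (hquot.mono hb).add hv (.one hv)
    have h1 : ValGE v 0 (∑ i ∈ Finset.range k, (σ Y / Y) ^ i) :=
      ValGE.sum hv _ _ fun i _ => (h0.pow hv i).mono (by simp)
    exact (h1.mul hv hquot).mono (by simp)
  have heq : (σ.toLinearMap - 1 : Module.End F K) (c i • Y ^ (i : ℕ)) =
      (c i • Y ^ (i : ℕ)) * ((σ Y / Y) ^ (i : ℕ) - 1) := by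
    simp only [LinearMap.sub_apply, AlgEquiv.toLinearMap_apply, Module.End.one_apply,
      Algebra.smul_def, div_pow, map_mul, map_pow, AlgEquiv.commutes]
    have := pow_ne_zero (i : ℕ) hY
    field_simp
  rw [heq]
  exact (hterm i hi).mul hv (hpow i)

end Operators

section ArtinSchreier

variable {K : Type*} [Field K] {v : K → ℤ} {p : ℕ} {e : ℤ}

/-- The mixed terms of `(x + y) ^ p`, including the factor `p`. -/
theorem ValGE.add_pow_sub_sub (hv : IsDiscVal v) (hp : p.Prime) (he : ValGE v e (p : K))
    {a b c : ℤ} {x y : K} (hx : ValGE v a x) (hy : ValGE v b y)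
    (hc : ∀ k : ℕ, 0 < k → k < p → c ≤ e + (k * a + (p - k) * b)) :
    ValGE v c ((x + y) ^ p - x ^ p - y ^ p) := by
  rw [add_pow_prime_eq' hp, add_sub_right_comm, add_sub_cancel_left, add_sub_cancel_left]
  refine (he.mul hv (ValGE.mixed_terms hv (c := c - e) hx hy fun k h0 h1 => ?_)).mono (by linarith)
  linarith [hc k h0 h1]

/-- The valuation of a root of a perturbed Artin–Schreier equation. -/
theorem IsDiscVal.val_of_artinSchreier (hv : IsDiscVal v) (hp : p.Prime) (he : ValGE v e (p : K))
    {Y z R : K} {n c : ℤ} (hR : R ≠ 0) (hRv : v R = p * n) (hn : n < 0) (hc : 0 ≤ c)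
    (hec : p * c ≤ e) (hz : ValGE v (n - c) z) (h : (Y + z) ^ p - z ^ p - Y = R) :
    Y ≠ 0 ∧ v Y = n := by
  have hp2 : (2 : ℤ) ≤ p := by exact_mod_cast hp.two_le
  have hY : Y ≠ 0 := by
    rintro rfl
    simp at h
    exact hR h.symm
  refine ⟨hY, ?_⟩
  rcases lt_trichotomy (v Y) n with hlt | heq | hgt
  · exfalso
    refine ValGE.not_succ (v := v) (pow_ne_zero p hY) ?_
    rw [hv.map_pow hY, show Y ^ p = R + Y - ((Y + z) ^ p - Y ^ p - z ^ p) by rw [← h]; ring]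
    have h1 : ValGE v (p * v Y + 1) R := .of_le (by rw [hRv]; nlinarith)
    have h2 : ValGE v (p * v Y + 1) Y := .of_le (by nlinarith)
    refine (h1.add hv h2).sub hv (ValGE.add_pow_sub_sub hv hp he (.of_le le_rfl) hz ?_)
    intro k hk0 hkp
    have hk0' : (1 : ℤ) ≤ k := by exact_mod_cast hk0
    have hkp' : (k : ℤ) + 1 ≤ p := by exact_mod_cast hkp
    nlinarith [mul_le_mul_of_nonneg_left (show v Y + 1 ≤ n by omega)
      (show (0 : ℤ) ≤ p - k by linarith), mul_nonneg hc (show (0 : ℤ) ≤ k by linarith)]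
  · exact heq
  · exfalso
    refine ValGE.not_succ (v := v) hR ?_
    have hY1 : ValGE v (n + 1) Y := .of_le hgt
    rw [hRv, ← h, show (Y + z) ^ p - z ^ p - Y =
      ((Y + z) ^ p - Y ^ p - z ^ p) + Y ^ p - Y by ring]
    refine ((ValGE.add_pow_sub_sub hv hp he hY1 hz ?_).add hv
      ((hY1.pow hv p).mono (by linarith))).sub hv (hY1.mono (by nlinarith))
    intro k hk0 hkp
    have hk0' : (1 : ℤ) ≤ k := by exact_mod_cast hk0
    nlinarith [mul_nonneg hc (show (0 : ℤ) ≤ k by linarith)]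

/-- Two roots of the same Artin–Schreier equation that are close to each other coincide. -/
theorem IsDiscVal.artinSchreier_root_unique (hv : IsDiscVal v) (hp : p.Prime)
    (he : ValGE v e (p : K)) {x η : K} {c : ℤ} (hc : 0 ≤ c) (hx : ValGE v (-c) x)
    (hec : p * c < e) (hη : ValGE v 1 η) (h : (x + η) ^ p - (x + η) = x ^ p - x) : η = 0 := by
  have hp2 : (2 : ℤ) ≤ p := by exact_mod_cast hp.two_le
  by_contra h0
  have h1 := hη.le h0
  refine ValGE.not_succ (v := v) h0 ?_
  have hη' : ValGE v (v η) η := .of_le le_rfl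
  have key : ValGE v (v η + 1) (((x + η) ^ p - x ^ p - η ^ p) + η ^ p) := by
    refine (ValGE.add_pow_sub_sub hv hp he hx hη' ?_).add hv ((hη'.pow hv p).mono (by nlinarith))
    intro k hk0 hkp
    have hk0' : (1 : ℤ) ≤ k := by exact_mod_cast hk0
    have hkp' : (k : ℤ) + 1 ≤ p := by exact_mod_cast hkp
    nlinarith [mul_nonneg hc (show (0 : ℤ) ≤ p - k by linarith)]
  rwa [show ((x + η) ^ p - x ^ p - η ^ p) + η ^ p = η by linear_combination h] at key

end ArtinSchreier

section TruncatedPower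

variable {F K : Type*} [Field F] [Field K] [Algebra F K] {v : K → ℤ} {p : ℕ} {e b₁ b₂ : ℤ}
  {S Z : Module.End F K}

theorem RaisesVal.pow_prime_of_one_add_pow_eq_one (hv : IsDiscVal v) (hp : p.Prime)
    (he : ValGE v e (p : K)) (hb₂ : 0 ≤ b₂) (hZ : RaisesVal v b₂ Z) (h : (1 + Z) ^ p = 1) :
    RaisesVal v (e + b₂) (Z ^ p) := by
  have hd := hZ.one_add_pow hv hp he hb₂
  rw [h, sub_self, zero_sub] at hd
  intro t x hx
  simpa using (hd t x hx).neg hv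

theorem RaisesVal.truncated_sub_one (hv : IsDiscVal v) (hb₁ : 0 ≤ b₁) (hp : 0 < p)
    (hZ : RaisesVal v b₂ Z) {c : ℕ → F} (hc0 : c 0 = 1)
    (hc : ∀ i < p, ValGE v (-(i * (b₂ - b₁))) (algebraMap F K (c i))) :
    ∃ G : Module.End F K, RaisesVal v (b₁ - b₂) G ∧ Commute Z G ∧
      ∑ i ∈ Finset.range p, c i • Z ^ i = 1 + Z * G := by
  obtain ⟨q, rfl⟩ := Nat.exists_eq_succ_of_ne_zero hp.ne'
  refine ⟨∑ i ∈ Finset.range q, c (i + 1) • Z ^ i, ?_, ?_, ?_⟩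
  · refine RaisesVal.sum hv _ _ fun i hi => ?_
    refine ((hZ.pow i).smul hv (hc (i + 1) (by simpa using hi))).mono ?_
    push_cast
    nlinarith [mul_nonneg (Int.natCast_nonneg i) hb₁]
  · exact Commute.sum_right _ _ _ fun i _ => ((Commute.refl Z).pow_right i).smul_right _
  · rw [Finset.sum_range_succ', Finset.mul_sum, hc0, pow_zero, one_smul, add_comm]
    simp only [mul_smul_comm, pow_succ']

theorem RaisesVal.mul_truncated_sub_one (hv : IsDiscVal v) (hb₁ : 0 ≤ b₁)
    (hS : RaisesVal v b₁ (S - 1)) (hZ : RaisesVal v b₂ Z) {G : Module.End F K}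
    (hG : RaisesVal v (b₁ - b₂) G) : RaisesVal v b₁ (S * (1 + Z * G) - 1) := by
  have hZG : RaisesVal v b₁ (Z * G) := (hZ.mul hG).mono (by linarith)
  rw [show S * (1 + Z * G) - 1 = (S - 1) * (1 + Z * G) + Z * G by
    simp only [mul_add, sub_mul, one_mul, mul_one]; abel]
  exact ((hS.mul (RaisesVal.one.add hv (hZG.mono hb₁))).mono (by linarith)).add hv hZG

/-- For `Ψ = S (1 + Z G) - 1` with `S ^ p = 1 + Z` and `(1 + Z) ^ p = 1`, the product
`Z ^ (p - 1) Ψ ^ p` is divisible by `p`. -/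
theorem RaisesVal.pow_pred_mul_pow (hv : IsDiscVal v) (hp : p.Prime)
    (he : ValGE v e (p : K)) (hb₁ : 0 ≤ b₁) (hb₂ : 0 ≤ b₂)
    (hS : RaisesVal v b₁ (S - 1)) (hZ : RaisesVal v b₂ Z) {G : Module.End F K}
    (hG : RaisesVal v (b₁ - b₂) G) (hZG : Commute Z G) (hSG : Commute S (1 + Z * G))
    (hSZ : S ^ p = 1 + Z) (h1 : (1 + Z) ^ p = 1) :
    RaisesVal v e (Z ^ (p - 1) * (S * (1 + Z * G) - 1) ^ p) := by
  have hp1 : p - 1 + 1 = p := Nat.sub_add_cancel hp.one_lt.le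
  have hΨ := RaisesVal.mul_truncated_sub_one hv hb₁ hS hZ hG
  set Ψ := S * (1 + Z * G) - 1 with hΨdef
  have hA := hΨ.one_add_pow hv hp he hb₁
  have hZGb : RaisesVal v b₁ (Z * G) := (hZ.mul hG).mono (by linarith)
  have hB := hZGb.one_add_pow hv hp he hb₁
  have hZp := RaisesVal.pow_prime_of_one_add_pow_eq_one hv hp he hb₂ hZ h1
  rw [show 1 + Ψ = S * (1 + Z * G) by rw [hΨdef]; abel, hSG.mul_pow, hSZ] at hA
  set A := (1 + Z) * (1 + Z * G) ^ p - 1 - Ψ ^ p with hAdef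
  set B := (1 + Z * G) ^ p - 1 - (Z * G) ^ p with hBdef
  have hZ0 : RaisesVal v 0 (1 + Z) := RaisesVal.one.add hv (hZ.mono hb₂)
  have hU : RaisesVal v 0 (Z ^ (p - 1)) :=
    (hZ.pow (p - 1)).mono (mul_nonneg (Int.natCast_nonneg _) hb₂)
  have hcomm : Z ^ (p - 1) * ((1 + Z) * Z ^ p) = (1 + Z) * (Z ^ p * Z ^ (p - 1)) := by
    have h2 : Commute (Z ^ (p - 1)) (1 + Z) :=
      (Commute.one_right _).add_right ((Commute.refl Z).pow_left _)
    rw [← mul_assoc, h2.eq, mul_assoc, ((Commute.refl Z).pow_pow (p - 1) p).eq]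
  have hkey : Z ^ (p - 1) * Ψ ^ p = Z ^ p + (1 + Z) * (Z ^ p * (Z ^ (p - 1) * G ^ p)) +
      Z ^ (p - 1) * ((1 + Z) * B) - Z ^ (p - 1) * A := by
    have e1 : Ψ ^ p = (1 + Z) * (1 + Z ^ p * G ^ p + B) - 1 - A := by
      have e2 : 1 + Z ^ p * G ^ p + B = (1 + Z * G) ^ p := by rw [hBdef, hZG.mul_pow]; abel
      rw [e2, hAdef]
      abel
    calc Z ^ (p - 1) * Ψ ^ p = Z ^ (p - 1) * Z + Z ^ (p - 1) * ((1 + Z) * Z ^ p) * G ^ p +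
          Z ^ (p - 1) * ((1 + Z) * B) - Z ^ (p - 1) * A := by
            rw [e1]
            simp only [mul_add, add_mul, mul_sub, one_mul, mul_one, mul_assoc]
            abel
      _ = _ := by rw [hcomm, ← pow_succ, hp1]; simp only [mul_assoc]
  rw [hkey]
  have hp1' : ((p - 1 : ℕ) : ℤ) = p - 1 := by rw [Nat.cast_sub hp.one_lt.le, Nat.cast_one]
  have hpb : 0 ≤ (p : ℤ) * b₁ := mul_nonneg (Int.natCast_nonneg _) hb₁
  have hlast := hZ0.mul (hZp.mul ((hZ.pow (p - 1)).mul (hG.pow p)))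
  refine (((hZp.mono (by linarith)).add hv (hlast.mono ?_)).add hv
    ((hU.mul (hZ0.mul hB)).mono (by linarith))).sub hv ((hU.mul hA).mono (by linarith))
  rw [hp1']
  linarith

/-- The operators `Z ^ q Ψ ^ s` whose exponents overflow the range of the scaffold raise valuations
by more than the scaffold predicts. -/
theorem RaisesVal.pow_mul_pow_of_overflow (hv : IsDiscVal v) (hp : p.Prime)
    (he : ValGE v e (p : K)) (hb₁ : 0 < b₁) (hb : (p : ℤ) ^ 2 * b₁ < b₂)
    (hbig : 0 < e - (p + 1) * b₂ + (p - 1) * b₁)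
    (hS : RaisesVal v b₁ (S - 1)) (hZ : RaisesVal v b₂ Z) {G : Module.End F K}
    (hG : RaisesVal v (b₁ - b₂) G) (hZG : Commute Z G) (hSG : Commute S (1 + Z * G))
    (hSZ : S ^ p = 1 + Z) (h1 : (1 + Z) ^ p = 1) {q s : ℕ} (hs : s + 2 ≤ 2 * p)
    (hqs : p ≤ q ∨ q = p - 1 ∧ p ≤ s) :
    RaisesVal v (q * b₂ + s * p * b₁ + b₁ + 1) (Z ^ q * (S * (1 + Z * G) - 1) ^ s) := by
  have hp2 : (2 : ℤ) ≤ p := by exact_mod_cast hp.two_le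
  have hb₂ : 0 ≤ b₂ := by nlinarith
  have hΨ := RaisesVal.mul_truncated_sub_one hv hb₁.le hS hZ hG
  have hs' : (s : ℤ) + 2 ≤ 2 * p := by exact_mod_cast hs
  have hs0 : (s : ℤ) * ((p - 1) * b₁) ≤ (2 * p - 2) * ((p - 1) * b₁) :=
    mul_le_mul_of_nonneg_right (by linarith) (mul_nonneg (by linarith) hb₁.le)
  have hpb : b₁ * 2 ≤ b₁ * p := mul_le_mul_of_nonneg_left hp2 hb₁.le
  rcases hqs with hq | ⟨rfl, hps⟩
  · obtain ⟨k, rfl⟩ := Nat.exists_eq_add_of_le hq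
    have hZp := RaisesVal.pow_prime_of_one_add_pow_eq_one hv hp he hb₂ hZ h1
    rw [pow_add]
    refine ((hZp.mul (hZ.pow k)).mul (hΨ.pow s)).mono ?_
    push_cast
    linarith
  · obtain ⟨k, rfl⟩ := Nat.exists_eq_add_of_le hps
    rw [pow_add, ← mul_assoc]
    refine ((RaisesVal.pow_pred_mul_pow hv hp he hb₁.le hb₂ hS hZ hG hZG hSG hSZ h1).mul
      (hΨ.pow k)).mono ?_
    push_cast [Nat.cast_sub hp.one_lt.le] at hs0 ⊢
    linarith

end TruncatedPower

section CyclicExtension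

variable {F K : Type*} [Field F] [Field K] [Algebra F K] {v : K → ℤ} {p : ℕ}

theorem AlgEquiv.pow_apply_sub_self (σ : K ≃ₐ[F] K) (x : K) (n : ℕ) :
    (σ ^ n) x - x = ∑ i ∈ Finset.range n, (σ ^ i) (σ x - x) := by
  have h := Finset.sum_range_sub (fun i => (σ ^ i) x) n
  rw [pow_zero, AlgEquiv.one_apply] at h
  rw [← h]
  exact Finset.sum_congr rfl fun i _ => by rw [map_sub, pow_succ, AlgEquiv.mul_apply]

theorem ValGE.algEquiv_pow (hv : IsDiscVal v) {σ : K ≃ₐ[F] K} {b : ℤ} (hb : 0 ≤ b)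
    (hσ : RaisesVal v b (σ.toLinearMap - 1 : Module.End F K)) {n : ℤ} {x : K} (hx : ValGE v n x)
    (i : ℕ) : ValGE v n ((σ ^ i) x) := by
  induction i with
  | zero => simpa using hx
  | succ i ih =>
    rw [pow_succ', AlgEquiv.mul_apply]
    simpa using ((hσ _ _ ih).mono (by linarith)).add hv ih

/-- The valuation of the generator `Y = x₂ - μ x₁` of the degree `p²` extension. -/
theorem IsDiscVal.val_generator (hv : IsDiscVal v) (hp : p.Prime) [CharZero K]
    {e b m : ℤ} (he : v (p : K) = e) (hb : 0 < b) (hm : 0 < m)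
    (hbe : (p : ℤ) * (p ^ 2 - 1) * b < e) (hbm : ((p : ℤ) ^ 2 - 1) * b < p ^ 2 * m)
    {a μ x₁ x₂ : K} (hμ : μ ≠ 0) (hμv : v μ = -(p ^ 2 * m))
    (hav : v a = -(p ^ 2 * b)) (hx₁0 : x₁ ≠ 0) (hx₁v : v x₁ = -(p * b)) (hx₁ : x₁ ^ p - x₁ = a)
    (hx₂ : x₂ ^ p - x₂ = μ ^ p * a + (x₁ ^ p + a ^ p - (x₁ + a) ^ p) / (p : K)) :
    x₂ - μ * x₁ ≠ 0 ∧ v (x₂ - μ * x₁) = -(p ^ 2 * m + b) := by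
  have hp2 : (2 : ℤ) ≤ p := by exact_mod_cast hp.two_le
  have hp0 : (p : K) ≠ 0 := by exact_mod_cast hp.ne_zero
  have hD : (x₁ ^ p + a ^ p - (x₁ + a) ^ p) / (p : K) =
      -∑ k ∈ Finset.Ioo 0 p, x₁ ^ k * a ^ (p - k) * ((p.choose k / p : ℕ) : K) := by
    rw [add_pow_prime_eq' hp]
    field_simp
    ring
  have hμx : v (μ * x₁) = -(p ^ 2 * m) - p * b := by
    rw [hv.map_mul _ _ hμ hx₁0, hμv, hx₁v]; ring
  have hμpx0 : -(μ ^ p * x₁) ≠ 0 := neg_ne_zero.mpr (mul_ne_zero (pow_ne_zero _ hμ) hx₁0)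
  have hμpx : v (-(μ ^ p * x₁)) = p * -(p ^ 2 * m + b) := by
    rw [hv.map_neg (neg_ne_zero.mp hμpx0), hv.map_mul _ _ (pow_ne_zero _ hμ) hx₁0,
      hv.map_pow hμ, hμv, hx₁v]
    ring
  have hpm : 0 < (p : ℤ) ^ 2 * m := by positivity
  obtain ⟨hR0, hRv⟩ := hv.map_add_eq hμpx0
    (y := (x₁ ^ p + a ^ p - (x₁ + a) ^ p) / (p : K) + μ * x₁) (by
      rw [hμpx]
      refine ValGE.add hv ?_ (.of_le (by rw [hμx]; nlinarith))
      rw [hD]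
      refine (ValGE.mixed_terms hv (.of_le hx₁v.ge) (.of_le hav.ge) ?_).neg hv
      intro k hk0 hkp
      have hk0' : (1 : ℤ) ≤ k := by exact_mod_cast hk0
      have hbm' : (p : ℤ) * (((p : ℤ) ^ 2 - 1) * b) + p ≤ p * (p ^ 2 * m) := by nlinarith
      have h1 : 0 ≤ ((k : ℤ) - 1) * (p * (p - 1) * b) := by
        have : (0 : ℤ) ≤ p - 1 := by linarith
        have : (0 : ℤ) ≤ k - 1 := by linarith
        positivity
      have h2 : 0 ≤ (p : ℤ) * (p - 1) * b := by
        have : (0 : ℤ) ≤ p - 1 := by linarith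
        positivity
      linarith)
  rw [hμpx] at hRv
  refine hv.val_of_artinSchreier hp (ValGE.of_le he.ge) hR0 hRv (by linarith)
    (c := (p - 1) * b) (by nlinarith) ?_ (z := μ * x₁) (.of_le (by rw [hμx]; linarith)) ?_
  · have : (p : ℤ) * ((p - 1) * b) ≤ p * (p ^ 2 - 1) * b := by
      have h1 : (p : ℤ) * (p ^ 2 - 1) * b = p * ((p - 1) * b) * (p + 1) := by ring
      have h2 : 0 ≤ (p : ℤ) * ((p - 1) * b) := by
        have : (0 : ℤ) ≤ p - 1 := by linarith
        positivity
      rw [h1]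
      nlinarith
    linarith
  · rw [sub_add_cancel, mul_pow]
    linear_combination hx₂ - μ ^ p * hx₁

/-- The ramification of `σ` and `σ ^ p` in the cyclic degree `p²` extension. -/
theorem raisesVal_sub_one_and_pow_sub_one (hv : IsDiscVal v) (hp : p.Prime) [CharZero K]
    [FiniteDimensional F K] {v0 : F → ℤ} (hdeg : Module.finrank F K = p ^ 2)
    (hram : ∀ x : F, x ≠ 0 → v (algebraMap F K x) = (p : ℤ) ^ 2 * v0 x)
    {e b m : ℤ} (he : v (p : K) = e) (hb : 0 < b) (hm : 0 < m) (hpb : ¬ (p : ℤ) ∣ b)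
    (hbe : (p : ℤ) * (p ^ 2 - 1) * b < e) (hbm : ((p : ℤ) ^ 2 - 1) * b < p ^ 2 * m)
    (hme : (p : ℤ) ^ 2 * (p - 1) * m + (2 * p * (p - 1) + 1) * b < e)
    {a μ : F} {x₁ x₂ : K} (ha : a ≠ 0) (hμ : μ ≠ 0) (hμv : v0 μ = -m) (hav : v0 a = -b)
    (hx₁ : x₁ ^ p - x₁ = algebraMap F K a)
    (hx₂ : x₂ ^ p - x₂ = algebraMap F K μ ^ p * algebraMap F K a +
      (x₁ ^ p + algebraMap F K a ^ p - (x₁ + algebraMap F K a) ^ p) / (p : K))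
    (σ : K ≃ₐ[F] K) {ε δ : K} (hσx₁ : σ x₁ = x₁ + 1 + ε) (hε : v ε = e - p * (p - 1) * b)
    (hσx₂ : σ x₂ = x₂ + (x₁ ^ p + 1 - (x₁ + 1) ^ p) / (p : K) + δ) (hδ : ValGE v 0 δ) :
    RaisesVal v b (σ.toLinearMap - 1 : Module.End F K) ∧
      RaisesVal v (p ^ 2 * m + b) ((σ ^ p).toLinearMap - 1 : Module.End F K) := by
  have hp2 : (2 : ℤ) ≤ p := by exact_mod_cast hp.two_le
  have hp0 : (p : K) ≠ 0 := by exact_mod_cast hp.ne_zero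
  have hpp : 0 < (p : ℤ) * (p - 1) * b := by
    have : (0 : ℤ) < p - 1 := by linarith
    positivity
  have hpm : 0 < (p : ℤ) ^ 2 * m := by positivity
  have hbe' : 3 * ((p : ℤ) * (p - 1) * b) < e := by
    have h1 : (p : ℤ) * (p ^ 2 - 1) * b = p * (p - 1) * b * (p + 1) := by ring
    nlinarith
  have hme' : (p : ℤ) ^ 2 * m + 2 * (p * (p - 1) * b) < e := by
    have h1 : (p : ℤ) ^ 2 * m ≤ (p : ℤ) ^ 2 * (p - 1) * m := by nlinarith
    nlinarith
  have hbm' : (p : ℤ) * (p - 1) * b < p ^ 2 * m := by nlinarith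
  have ha' : algebraMap F K a ≠ 0 := (map_ne_zero _).mpr ha
  have hμ' : algebraMap F K μ ≠ 0 := (map_ne_zero _).mpr hμ
  have hav' : v (algebraMap F K a) = -(p ^ 2 * b) := by rw [hram _ ha, hav]; ring
  have hμv' : v (algebraMap F K μ) = -(p ^ 2 * m) := by rw [hram _ hμ, hμv]; ring
  have heG : ValGE v e (p : K) := .of_le he.ge
  have he0 : 0 < e := by linarith
  obtain ⟨hx₁0, hx₁v⟩ : x₁ ≠ 0 ∧ v x₁ = -(p * b) :=
    hv.val_of_artinSchreier hp heG ha' (by rw [hav']; ring) (by nlinarith) (c := 0) le_rfl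
      (by linarith) (z := 0) .zero (by rw [add_zero, zero_pow hp.ne_zero, sub_zero, hx₁])
  obtain ⟨hY0, hYv⟩ := hv.val_generator hp he hb hm hbe hbm hμ' hμv' hav' hx₁0 hx₁v hx₁ hx₂
  set M := algebraMap F K μ with hM
  set Y := x₂ - M * x₁ with hY
  have hσM : ∀ i : ℕ, (σ ^ i) M = M := fun i => AlgEquiv.commutes _ _
  have hx₁G : ValGE v (-(p * b)) x₁ := .of_le hx₁v.ge
  have hεG : ValGE v (e - p * (p - 1) * b) ε := .of_le hε.ge
  have hMG : ValGE v (-(p ^ 2 * m)) M := .of_le hμv'.ge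
  have hD : (x₁ ^ p + 1 - (x₁ + 1) ^ p) / (p : K) =
      -∑ k ∈ Finset.Ioo 0 p, x₁ ^ k * 1 ^ (p - k) * ((p.choose k / p : ℕ) : K) := by
    rw [add_pow_prime_eq' hp, one_pow]
    field_simp
    ring
  have hDG : ValGE v (-(p ^ 2 * m)) ((x₁ ^ p + 1 - (x₁ + 1) ^ p) / (p : K)) := by
    rw [hD]
    refine (ValGE.mixed_terms hv hx₁G (.one hv) ?_).neg hv
    intro k hk0 hkp
    have hkp' : (k : ℤ) + 1 ≤ p := by exact_mod_cast hkp
    have : (k : ℤ) * (p * b) ≤ (p - 1) * (p * b) :=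
      mul_le_mul_of_nonneg_right (by linarith) (by positivity)
    linarith
  have hcop : IsCoprime (v Y) ((p ^ 2 : ℕ) : ℤ) := by
    rw [hYv, Nat.cast_pow]
    refine IsCoprime.pow_right (IsCoprime.neg_left ?_)
    refine ((Nat.prime_iff_prime_int.mp hp).coprime_iff_not_dvd.mpr fun h => hpb ?_).symm
    rw [pow_two, mul_assoc] at h
    exact (dvd_add_right (dvd_mul_right _ _)).mp h
  have hram' : ∀ x : F, x ≠ 0 → v (algebraMap F K x) = ((p ^ 2 : ℕ) : ℤ) * v0 x := fun x hx => by
    rw [hram x hx]; push_cast; rfl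
  have hσY : σ Y - Y = (x₁ ^ p + 1 - (x₁ + 1) ^ p) / (p : K) + δ - M - M * ε := by
    have h := hσM 1
    rw [pow_one] at h
    rw [hY, map_sub, map_mul, hσx₂, hσx₁, h]
    ring
  have h1 : RaisesVal v b (σ.toLinearMap - 1 : Module.End F K) := by
    refine RaisesVal.of_generator hv hdeg hram' hY0 hcop σ hb.le ?_
    rw [hYv, hσY]
    refine (((hDG.add hv (hδ.mono (by linarith))).sub hv hMG).sub hv
      ((hMG.mul hv hεG).mono (by linarith))).mono (by linarith)
  refine ⟨h1, ?_⟩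
  have hpow : ∀ {n : ℤ} {x : K}, ValGE v n x → ∀ i : ℕ, ValGE v n ((σ ^ i) x) :=
    fun hx i => hx.algEquiv_pow hv hb.le h1 i
  have hfix : (σ ^ p) x₁ = x₁ := by
    have h0 : (σ ^ p) x₁ - x₁ = 0 := by
      refine hv.artinSchreier_root_unique hp heG (c := p * b) (by positivity) hx₁G ?_ ?_ ?_
      · nlinarith
      · rw [AlgEquiv.pow_apply_sub_self, hσx₁, add_assoc, add_sub_cancel_left]
        simp only [map_add, map_one, Finset.sum_add_distrib, Finset.sum_const, Finset.card_range,
          nsmul_eq_mul, mul_one]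
        exact (heG.mono he0).add hv
          (ValGE.sum hv _ _ fun i _ => (hpow hεG i).mono (by linarith))
      · rw [add_sub_cancel, ← map_pow, ← map_sub, hx₁, AlgEquiv.commutes]
    exact sub_eq_zero.mp h0
  refine RaisesVal.of_generator hv hdeg hram' hY0 hcop (σ ^ p)
    (by linarith) ?_
  rw [hYv, neg_add_cancel]
  set κ := (((x₁ + 1) + ε) ^ p - (x₁ + 1) ^ p) / (p : K) + δ - M * ε with hκ
  have hκG : ValGE v 0 κ := by
    have hz : ValGE v (-(p * b)) (x₁ + 1) :=
      hx₁G.add hv ((ValGE.one hv).mono (by nlinarith))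
    have heq : (((x₁ + 1) + ε) ^ p - (x₁ + 1) ^ p) / (p : K) = ε ^ p * (p : K)⁻¹ +
        ∑ k ∈ Finset.Ioo 0 p, (x₁ + 1) ^ k * ε ^ (p - k) * ((p.choose k / p : ℕ) : K) := by
      rw [add_pow_prime_eq' hp (x₁ + 1) ε]
      field_simp
      ring
    rw [hκ, heq]
    refine ((ValGE.add hv ?_ (ValGE.mixed_terms hv hz hεG ?_)).add hv hδ).sub hv
      ((hMG.mul hv hεG).mono (by linarith))
    · refine ((hεG.pow hv p).mul hv (ValGE.of_le (hv.map_inv hp0).ge)).mono ?_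
      rw [he]
      have := mul_le_mul_of_nonneg_right hp2 (show 0 ≤ e - p * (p - 1) * b by linarith)
      linarith
    · intro k hk0 hkp
      have hkp' : (k : ℤ) + 1 ≤ p := by exact_mod_cast hkp
      have h3 : (k : ℤ) * (p * b) ≤ (p - 1) * (p * b) :=
        mul_le_mul_of_nonneg_right (by linarith) (by positivity)
      have h4 : e - p * (p - 1) * b ≤ (p - k) * (e - p * (p - 1) * b) := by
        have := mul_nonneg (show (0 : ℤ) ≤ p - k - 1 by linarith)
          (show 0 ≤ e - p * (p - 1) * b by linarith)
        linarith
      linarith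
  have htel : σ (Y + x₁ / p) - (Y + x₁ / p) = ((p : K)⁻¹ - M) + κ := by
    have h2 : σ x₁ ^ p - σ x₁ = x₁ ^ p - x₁ := by
      rw [← map_pow, ← map_sub, hx₁, AlgEquiv.commutes]
    rw [hσx₁] at h2
    rw [map_add, map_div₀, map_natCast, add_sub_add_comm, hσY, hσx₁, hκ]
    field_simp
    linear_combination -h2
  have hsum := σ.pow_apply_sub_self (Y + x₁ / p) p
  rw [htel, map_add, map_div₀, map_natCast, hfix, add_sub_add_right_eq_sub] at hsum
  rw [hsum]
  simp only [map_add, map_sub, map_inv₀, map_natCast, hσM, Finset.sum_add_distrib,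
    Finset.sum_const, Finset.card_range, nsmul_eq_mul]
  refine ValGE.add hv ?_ (ValGE.sum hv _ _ fun i _ => hpow hκG i)
  rw [mul_sub, mul_inv_cancel₀ hp0]
  exact (ValGE.one hv).sub hv ((heG.mul hv hMG).mono (by linarith))

end CyclicExtension

/-- If `j + r ≥ p²`, then adding the two base `p` digits of `j` and `r` overflows. -/
theorem Nat.digit_sum_overflow {p j r : ℕ} (hp0 : 0 < p) (hjr : p ^ 2 ≤ r + j) :
    p ≤ j / p + r / p ∨ j / p + r / p = p - 1 ∧ p ≤ j % p + r % p := by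
  have hj0 := Nat.mod_lt j hp0
  have hr0 := Nat.mod_lt r hp0
  have hsum : p * p ≤ p * (j / p + r / p) + (j % p + r % p) := by
    have := Nat.div_add_mod j p
    have := Nat.div_add_mod r p
    nlinarith
  rcases Nat.lt_or_ge (j / p + r / p) p with hlt | hge
  · right
    obtain ⟨n, hn⟩ := Nat.exists_eq_add_of_lt hlt
    have hn0 : n = 0 := by
      by_contra hne
      have : 1 ≤ n := Nat.one_le_iff_ne_zero.mpr hne
      have : p * (j / p + r / p + 2) ≤ p * p := Nat.mul_le_mul_left p (by omega)
      nlinarith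
    have hq : j / p + r / p + 1 = p := by omega
    refine ⟨by omega, ?_⟩
    have : p * (j / p + r / p + 1) = p * p := by rw [hq]
    nlinarith
  · exact Or.inl hge

/-- Proposition 4.2: if `p²e₀ − (p+1)b₂ + (p−1)b₁ > 0` then
`π₀^{d₀−d_j}·Ψ^{(j)}·ρ_r ∈ 𝔐₂` whenever `0 ≤ r, j < p²` and `r + j ≥ p²`. -/
theorem statement15
    (p : ℕ) (hp : p.Prime)
    (K0 K2 : Type*) [Field K0] [Field K2] [CharZero K0] [CharZero K2]
    [Algebra K0 K2] [IsGalois K0 K2] [FiniteDimensional K0 K2]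
    (hdeg : Module.finrank K0 K2 = p ^ 2)
    (hcyc : IsCyclic (K2 ≃ₐ[K0] K2))
    (v0 : K0 → ℤ) (v2 : K2 → ℤ)
    (hv0 : IsDiscVal v0) (hv2 : IsDiscVal v2)
    (e0 : ℤ) (he0 : e0 = v0 (p : K0)) (he0pos : 1 ≤ e0)
    (hram : ∀ x : K0, x ≠ 0 → v2 (algebraMap K0 K2 x) = (p : ℤ) ^ 2 * v0 x)
    (a1 μ a2 : K0) (ha1 : a1 ≠ 0) (hμ0 : μ ≠ 0)
    (hwitt : ∀ y : K0, y ^ p - y ≠ a1)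
    (hnd : ¬ ((p : ℤ) ∣ v0 a1))
    (hneg : v0 a1 < 0)
    (hbd : -((p : ℤ) * e0) < ((p : ℤ) ^ 2 - 1) * v0 a1)
    (m : ℤ) (hm : m = -v0 μ) (hmpos : 0 < m)
    (hmu1 : (p : ℤ) ^ 2 * (p - 1) * m - (2 * p * (p - 1) + 1) * v0 a1 < (p : ℤ) ^ 2 * e0)
    (hmu2 : -(((p : ℤ) ^ 2 - 1) * v0 a1) < (p : ℤ) ^ 2 * m)
    (ha2 : a2 = μ ^ p * a1)
    (x1 x2 : K2)
    (hx1 : x1 ^ p - x1 = algebraMap K0 K2 a1)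
    (hx2 : x2 ^ p - x2 = algebraMap K0 K2 a2 +
      (x1 ^ p + (algebraMap K0 K2 a1) ^ p - (x1 + algebraMap K0 K2 a1) ^ p) / (p : K2))
    (hgen : Algebra.adjoin K0 {x1, x2} = ⊤)
    (b1 b2 : ℤ) (hb1 : b1 = -v0 a1) (hb2 : b2 = (p : ℤ) ^ 2 * m + b1)
    (σ1 : K2 ≃ₐ[K0] K2) (ε δ' : K2)
    (hσ1x1 : σ1 x1 = x1 + 1 + ε)
    (hε : ε ≠ 0) (hεv : v2 ε = (p : ℤ) ^ 2 * e0 - p * (p - 1) * b1)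
    (hσ1x2 : σ1 x2 = x2 + (x1 ^ p + 1 - (x1 + 1) ^ p) / (p : K2) + δ')
    (hδ' : δ' = 0 ∨ 0 < v2 δ')
    (Ψ1 Ψ2 : Module.End K0 K2)
    (hΨ2 : Ψ2 = ((σ1 ^ p).toLinearMap : Module.End K0 K2) - 1)
    (hΨ1 : Ψ1 = (σ1.toLinearMap : Module.End K0 K2) *
      (∑ i ∈ Finset.range p,
        ((∏ k ∈ Finset.range i, (μ - (k : K0))) / (Nat.factorial i : K0)) • Ψ2 ^ i) - 1)
    (π0 : K0) (hπ0 : π0 ≠ 0) (hπ0v : v0 π0 = 1)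
    (ρ0 : K2) (hρ0 : ρ0 ≠ 0) (hρ0v : v2 ρ0 = b2 % (p : ℤ) ^ 2)
    (d : ℕ → ℤ)
    (hd : ∀ a : ℕ, a < p ^ 2 →
      d a = Int.fdiv ((1 + ((a / p : ℕ) : ℤ)) * b2 + ((a % p : ℕ) : ℤ) * (p : ℤ) * b1)
        ((p : ℤ) ^ 2))
    (Ψf : ℕ → Module.End K0 K2)
    (hΨf : ∀ a : ℕ, Ψf a = if a < p ^ 2 then Ψ2 ^ (a / p) * Ψ1 ^ (a % p) else 0)
    (ρ : K2) (hρ : ρ = algebraMap K0 K2 (π0 ^ d 0) * ρ0)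
    (ρf : ℕ → K2) (hρf : ∀ a : ℕ, ρf a = algebraMap K0 K2 (π0 ^ (-d a)) * Ψf a ρ)
    (hbig : 0 < (p : ℤ) ^ 2 * e0 - (p + 1) * b2 + (p - 1) * b1) :
    ∀ j r : ℕ, j < p ^ 2 → r < p ^ 2 → p ^ 2 ≤ r + j →
      (algebraMap K0 K2 (π0 ^ (d 0 - d j)) * Ψf j (ρf r) = 0 ∨
        1 ≤ v2 (algebraMap K0 K2 (π0 ^ (d 0 - d j)) * Ψf j (ρf r))) := by
  have hp0 : 0 < p := hp.pos
  have hp2 : (2 : ℤ) ≤ p := by exact_mod_cast hp.two_le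
  have hpK0 : (p : K0) ≠ 0 := by exact_mod_cast hp.ne_zero
  have hb1pos : 0 < b1 := by omega
  have hv0a : v0 a1 = -b1 := by omega
  have he : v2 (p : K2) = (p : ℤ) ^ 2 * e0 := by
    rw [← map_natCast (algebraMap K0 K2), hram _ hpK0, he0]
  have heG : ValGE v2 ((p : ℤ) ^ 2 * e0) (p : K2) := .of_le he.ge
  have hbm : ((p : ℤ) ^ 2 - 1) * b1 < p ^ 2 * m := by rw [hb1]; linarith
  have hb : (p : ℤ) ^ 2 * b1 < b2 := by rw [hb2]; linarith
  obtain ⟨hS, hZ⟩ := raisesVal_sub_one_and_pow_sub_one hv2 hp hdeg hram he hb1pos hmpos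
    (fun h => hnd (by rwa [hv0a, dvd_neg]))
    (by rw [hv0a] at hbd; nlinarith) hbm (by rw [hv0a] at hmu1; linarith) ha1 hμ0
    (by omega) hv0a hx1 (by rw [hx2, ha2, map_mul, map_pow]) σ1 hσ1x1 hεv hσ1x2
    (hδ'.imp id le_of_lt)
  rw [← hΨ2, ← hb2] at hZ
  set c : ℕ → K0 := fun i => (∏ k ∈ Finset.range i, (μ - (k : K0))) / (Nat.factorial i : K0)
    with hcdef
  have hc : ∀ i < p, ValGE v2 (-(i * (b2 - b1))) (algebraMap K0 K2 (c i)) := by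
    intro i hi
    have h := ValGE.binomial (x := algebraMap K0 K2 μ) (n := b2 - b1) hv2 hp
      (heG.mono (by nlinarith)) (by rw [hb2]; nlinarith)
      (.of_le (by rw [hram _ hμ0, hb2, hm]; linarith)) hi
    simpa [hcdef] using h
  obtain ⟨G, hG, hZG, hE⟩ := RaisesVal.truncated_sub_one hv2 hb1pos.le hp0 hZ
    (show c 0 = 1 by simp [hcdef]) hc
  set S : Module.End K0 K2 := σ1.toLinearMap with hSdef
  have hpow : ∀ n : ℕ, ((σ1 ^ n).toLinearMap : Module.End K0 K2) = S ^ n := fun n => by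
    ext x
    induction n generalizing x with
    | zero => simp
    | succ n ih => simpa [pow_succ, hSdef] using ih (σ1 x)
  have hSZ : S ^ p = 1 + Ψ2 := by rw [hΨ2, hpow]; abel
  have h1 : (1 + Ψ2) ^ p = 1 := by
    have hcard : σ1 ^ (p * p) = 1 := by
      rw [← pow_two, ← hdeg, ← IsGalois.card_aut_eq_finrank K0 K2]
      exact pow_card_eq_one'
    rw [← hSZ, ← pow_mul, ← hpow, hcard]
    rfl
  have hSZc : Commute S Ψ2 := by
    rw [hΨ2, hpow]
    exact ((Commute.refl S).pow_right p).sub_right (Commute.one_right S)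
  have hSE : Commute S (1 + Ψ2 * G) := by
    rw [← hE]
    exact Commute.sum_right _ _ _ fun i _ => (hSZc.pow_right i).smul_right _
  have hΨ1' : Ψ1 = S * (1 + Ψ2 * G) - 1 := by rw [hΨ1, ← hE]
  have hΨc : Commute Ψ1 Ψ2 := by
    rw [hΨ1']
    refine (Commute.mul_left hSZc ?_).sub_left (Commute.one_left _)
    exact (Commute.one_left _).add_left ((Commute.refl Ψ2).mul_left hZG.symm)
  intro j r hj hr hjr
  have hj0 := Nat.mod_lt j hp0
  have hr0 := Nat.mod_lt r hp0
  have hqs := Nat.digit_sum_overflow hp0 hjr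
  have hT := RaisesVal.pow_mul_pow_of_overflow hv2 hp heG hb1pos hb hbig hS hZ hG hZG hSE hSZ h1
    (q := j / p + r / p) (s := j % p + r % p) (by omega) hqs
  rw [← hΨ1'] at hT
  have hTeq : Ψf j * Ψf r = Ψ2 ^ (j / p + r / p) * Ψ1 ^ (j % p + r % p) := by
    rw [hΨf, hΨf, if_pos hj, if_pos hr, pow_add, pow_add, mul_assoc, mul_assoc,
      ← mul_assoc (Ψ1 ^ (j % p)), (hΨc.pow_pow (j % p) (r / p)).eq, mul_assoc]
  have hval : ∀ n : ℤ, ValGE v2 ((p : ℤ) ^ 2 * n) (algebraMap K0 K2 (π0 ^ n)) := fun n =>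
    .of_le (by rw [hram _ (zpow_ne_zero n hπ0), hv0.map_zpow hπ0, hπ0v, mul_one])
  have hexpr : algebraMap K0 K2 (π0 ^ (d 0 - d j)) * Ψf j (ρf r) =
      algebraMap K0 K2 (π0 ^ (d 0 - d j)) * (algebraMap K0 K2 (π0 ^ (-d r)) *
        (Ψ2 ^ (j / p + r / p) * Ψ1 ^ (j % p + r % p)) ρ) := by
    rw [hρf, ← Algebra.smul_def (π0 ^ (-d r)), map_smul, Algebra.smul_def, ← hTeq]
    rfl
  have hpp : (0 : ℤ) < (p : ℤ) ^ 2 := by positivity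
  have hdle : ∀ a < p ^ 2, (p : ℤ) ^ 2 * d a ≤
      (1 + ((a / p : ℕ) : ℤ)) * b2 + ((a % p : ℕ) : ℤ) * (p : ℤ) * b1 := fun a ha => by
    rw [hd a ha, Int.fdiv_eq_ediv_of_nonneg _ hpp.le]
    exact Int.mul_ediv_self_le hpp.ne'
  have hd0 : (p : ℤ) ^ 2 * d 0 = b2 - b2 % (p : ℤ) ^ 2 := by
    rw [hd 0 (by positivity), Int.fdiv_eq_ediv_of_nonneg _ hpp.le]
    have := Int.mul_ediv_add_emod b2 ((p : ℤ) ^ 2)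
    simp only [Nat.zero_div, Nat.zero_mod, Nat.cast_zero, add_zero, one_mul, zero_mul]
    linarith
  have hmod : b2 % (p : ℤ) ^ 2 ≤ b1 := by
    rw [hb2, Int.mul_add_emod_self_left]
    have h4 := Int.mul_ediv_add_emod b1 ((p : ℤ) ^ 2)
    have h5 := mul_nonneg hpp.le (Int.ediv_nonneg hb1pos.le hpp.le)
    linarith
  have hρG : ValGE v2 b2 ρ := by
    rw [hρ]
    exact ((hval (d 0)).mul hv2 (.of_le hρ0v.ge)).mono (by rw [hd0]; linarith)
  rw [hexpr]
  refine ((hval _).mul hv2 ((hval _).mul hv2 (hT _ _ hρG))).mono ?_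
  have h2 := hdle j hj
  have h3 := hdle r hr
  push_cast at h2 h3 ⊢
  linarith
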